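/- Define h(x) = E[min(Poi(x), Poi(1))] for independent Poisson variables. Then h(x) = (1 + x − E[|Poi(x) − Poi(1)|])/2, and consequently h(x) = (1 + x − 2e^{−x−1}(I₀(2√x) + √x·I₁(2√x)) − (1−x)(1 − 2Q₁(√(2x), √2)))/2 for x > 0. -/

import Mathlib

open MeasureTheory ProbabilityTheory

/-- Modified Bessel function of the first kind of nonnegative integer order. -/
noncomputable def besselI (k : ℕ) (y : ℝ) : ℝ :=
  ∑' i : ℕ, (y / 2) ^ (2 * i + k) / (Nat.factorial i * Nat.factorial (i + k))

/-- Marcum Q function `Q₁(a,b) = e^{−(a²+b²)/2} Σ_{k=0}^∞ (a/b)^k I_k(ab)`. -/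
noncomputable def marcumQ1 (a b : ℝ) : ℝ :=
  Real.exp (-(a ^ 2 + b ^ 2) / 2) * ∑' k : ℕ, (a / b) ^ k * besselI k (a * b)

/-!
On `{X < Y}` the minimum is `X` and on `{Y ≤ X}` it is `Y`. If `X` is Poisson of rate `r` and
independent of `Z`, then `E[X f(X, Z)] = r E[f(X + 1, Z)]`, because `n P(X = n) = r P(X = n - 1)`;
for `Y` of rate `s` this gives `E[min(X, Y)] = r P(X + 1 < Y) + s P(Y + 1 ≤ X)`. Both
probabilities reduce to `P(Y ≤ X)`, `P(X = Y)` and `P(Y = X + 1)`. The last two are values of the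
Skellam law `P(X = Y + k) = exp(-(r + s)) (r / s)^(k / 2) I_k(2 √(r s))`, and summing that law over
`k` gives `P(Y ≤ X) = Q₁(√(2 r), √(2 s))`.

The a.e. measurability of `X` and `Y` comes from the outer measures of their fibres summing to `1`:
a fibre and its complement then have outer measures adding up to at most `1`, which makes the fibre
null-measurable.
-/

open scoped ENNReal NNReal

section Law

variable {Ω β : Type*} {mΩ : MeasurableSpace Ω} {mβ : MeasurableSpace β} {μ : Measure Ω}

lemma nullMeasurableSet_of_measure_add_measure_compl_le [IsFiniteMeasure μ] {s : Set Ω}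
    (h : μ s + μ sᶜ ≤ μ Set.univ) : NullMeasurableSet s μ := by
  have inner_subset : (toMeasurable μ sᶜ)ᶜ ⊆ s :=
    Set.compl_subset_comm.1 (subset_toMeasurable μ sᶜ)
  have outer_le_inner : μ (toMeasurable μ s) ≤ μ (toMeasurable μ sᶜ)ᶜ := by
    rw [measure_compl (measurableSet_toMeasurable _ _) (measure_ne_top _ _),
      measure_toMeasurable, measure_toMeasurable]
    exact ENNReal.le_sub_of_add_le_right (measure_ne_top _ _) h
  have inner_ae_eq_outer : ((toMeasurable μ sᶜ)ᶜ : Set Ω) =ᵐ[μ] toMeasurable μ s :=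
    ae_eq_of_subset_of_measure_ge (inner_subset.trans (subset_toMeasurable μ s)) outer_le_inner
      (measurableSet_toMeasurable _ _).compl.nullMeasurableSet (measure_ne_top _ _)
  exact (measurableSet_toMeasurable μ s).nullMeasurableSet.congr <|
    (inner_ae_eq_outer.symm.le.trans inner_subset.eventuallyLE).antisymm
      (subset_toMeasurable μ s).eventuallyLE

lemma aemeasurable_of_tsum_measure_preimage_singleton_le [IsFiniteMeasure μ] [Countable β]
    {f : Ω → β} (h : ∑' b, μ (f ⁻¹' {b}) ≤ μ Set.univ) : AEMeasurable f μ := by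
  have fiber (b : β) : NullMeasurableSet (f ⁻¹' {b}) μ := by
    apply nullMeasurableSet_of_measure_add_measure_compl_le
    calc μ (f ⁻¹' {b}) + μ (f ⁻¹' {b})ᶜ
        ≤ μ (f ⁻¹' {b}) + ∑' c : ({b}ᶜ : Set β), μ (f ⁻¹' {c.1}) := by
          rw [← Set.preimage_compl, ← Set.biUnion_preimage_singleton f {b}ᶜ]
          gcongr
          exact measure_biUnion_le μ (Set.to_countable _) fun c ↦ f ⁻¹' {c}
      _ = ∑' c, μ (f ⁻¹' {c}) := by
          rw [← ENNReal.summable.tsum_add_tsum_compl (s := {b}) ENNReal.summable,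
            tsum_singleton b fun c ↦ μ (f ⁻¹' {c})]
      _ ≤ μ Set.univ := h
  refine NullMeasurable.aemeasurable fun s _ ↦ ?_
  rw [← Set.biUnion_preimage_singleton]
  exact .biUnion s.to_countable fun b _ ↦ fiber b

lemma hasLaw_of_measure_preimage_singleton [IsProbabilityMeasure μ] [Countable β]
    [MeasurableSingletonClass β] {ν : Measure β} [IsProbabilityMeasure ν] {f : Ω → β}
    (h : ∀ b, μ (f ⁻¹' {b}) = ν {b}) : HasLaw f ν μ := by
  have hf : AEMeasurable f μ := by
    apply aemeasurable_of_tsum_measure_preimage_singleton_le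
    simpa [h] using (ν.tsum_indicator_apply_singleton Set.univ .univ).le
  refine ⟨hf, Measure.ext_of_singleton fun b ↦ ?_⟩
  rw [Measure.map_apply_of_aemeasurable hf (measurableSet_singleton b), h]

end Law

section Min

variable {Ω : Type*} {mΩ : MeasurableSpace Ω} {μ : Measure Ω} {f g : Ω → ℝ}

lemma integral_min_eq_half (hf : Integrable f μ) (hg : Integrable g μ) :
    ∫ ω, min (f ω) (g ω) ∂μ = (∫ ω, f ω ∂μ + ∫ ω, g ω ∂μ - ∫ ω, |f ω - g ω| ∂μ) / 2 := by
  have pointwise (ω : Ω) : min (f ω) (g ω) = (f ω + g ω - |f ω - g ω|) / 2 := by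
    rw [inf_eq_half_smul_add_sub_abs_sub' ℝ, smul_eq_mul, abs_sub_comm, inv_mul_eq_div]
  simp_rw [pointwise]
  have abs_sub_integrable : Integrable (fun ω ↦ |f ω - g ω|) μ := (hf.sub hg).abs
  rw [integral_div, integral_sub (hf.fun_add hg) abs_sub_integrable, integral_add hf hg]

lemma integral_min_eq_setIntegral_add_setIntegral (hf : Integrable f μ) (hg : Integrable g μ) :
    ∫ ω, min (f ω) (g ω) ∂μ = ∫ ω in {ω | f ω < g ω}, f ω ∂μ + ∫ ω in {ω | g ω ≤ f ω}, g ω ∂μ := by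
  have null : NullMeasurableSet {ω | f ω < g ω} μ :=
    nullMeasurableSet_lt hf.aemeasurable hg.aemeasurable
  have compl : {ω | f ω < g ω}ᶜ = {ω | g ω ≤ f ω} := by ext; simp
  have min_integrable : Integrable (fun ω ↦ min (f ω) (g ω)) μ := hf.inf hg
  rw [← integral_add_compl₀ null min_integrable, compl]
  congr 1
  · exact setIntegral_congr_fun₀ null fun ω hω ↦ min_eq_left hω.le
  · exact setIntegral_congr_fun₀ (compl ▸ null.compl) fun ω hω ↦ min_eq_right hω

end Min

section Poisson

variable {Ω β : Type*} {mΩ : MeasurableSpace Ω} {mβ : MeasurableSpace β} {μ : Measure Ω}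
  {r s : ℝ≥0} {X Y : Ω → ℕ}

lemma succ_mul_poissonMeasure_singleton_succ (r : ℝ≥0) (n : ℕ) :
    ((n + 1 : ℕ) : ℝ≥0∞) * Po(r) {n + 1} = r * Po(r) {n} := by
  rw [poissonMeasure_singleton, poissonMeasure_singleton, ← ENNReal.ofReal_natCast,
    ← ENNReal.ofReal_coe_nnreal, ← ENNReal.ofReal_mul (by positivity),
    ← ENNReal.ofReal_mul (by positivity), Nat.factorial_succ]
  congr 1
  push_cast
  field_simp
  ring

lemma lintegral_natCast_mul_poissonMeasure (r : ℝ≥0) (f : ℕ → ℝ≥0∞) :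
    ∫⁻ n, n * f n ∂Po(r) = r * ∫⁻ n, f (n + 1) ∂Po(r) := by
  rw [lintegral_countable', lintegral_countable', tsum_eq_zero_add' ENNReal.summable,
    ← ENNReal.tsum_mul_left]
  simp only [Nat.cast_zero, zero_mul, zero_add]
  refine tsum_congr fun n ↦ ?_
  rw [mul_right_comm, succ_mul_poissonMeasure_singleton_succ]
  ring

lemma lintegral_natCast_mul_of_hasLaw_poissonMeasure {Z : Ω → β}
    (hX : HasLaw X Po(r) μ) (hZ : AEMeasurable Z μ) (hXZ : IndepFun X Z μ)
    {f : ℕ × β → ℝ≥0∞} (hf : Measurable f) :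
    ∫⁻ ω, X ω * f (X ω, Z ω) ∂μ = r * ∫⁻ ω, f (X ω + 1, Z ω) ∂μ := by
  have := hX.isProbabilityMeasure
  have law : HasLaw (fun ω ↦ (X ω, Z ω)) (Po(r).prod (μ.map Z)) μ :=
    hXZ.hasLaw_prod hX ⟨hZ, rfl⟩
  have hf_succ : Measurable fun p : ℕ × β ↦ f (p.1 + 1, p.2) := by fun_prop
  have hf_mul : Measurable fun p : ℕ × β ↦ (p.1 : ℝ≥0∞) * f p := by fun_prop
  rw [law.lintegral_comp hf_mul.aemeasurable, law.lintegral_comp hf_succ.aemeasurable,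
    lintegral_prod_symm _ hf_mul.aemeasurable, lintegral_prod_symm _ hf_succ.aemeasurable,
    ← lintegral_const_mul _ hf_succ.lintegral_prod_left']
  exact lintegral_congr fun z ↦ lintegral_natCast_mul_poissonMeasure r fun n ↦ f (n, z)

lemma setIntegral_natCast_of_hasLaw_poissonMeasure {Z : Ω → β}
    (hX : HasLaw X Po(r) μ) (hZ : AEMeasurable Z μ) (hXZ : IndepFun X Z μ)
    {A : Set (ℕ × β)} (hA : MeasurableSet A) :
    ∫ ω in {ω | (X ω, Z ω) ∈ A}, (X ω : ℝ) ∂μ = r * μ.real {ω | (X ω + 1, Z ω) ∈ A} := by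
  have := hX.isProbabilityMeasure
  have hXm := hX.aemeasurable
  have hA_null : NullMeasurableSet {ω | (X ω, Z ω) ∈ A} μ :=
    (hXm.prodMk hZ).nullMeasurableSet_preimage hA
  have hA_succ_null : NullMeasurableSet {ω | (X ω + 1, Z ω) ∈ A} μ :=
    ((Measurable.of_discrete.comp_aemeasurable hXm).prodMk hZ).nullMeasurableSet_preimage hA
  have key := lintegral_natCast_mul_of_hasLaw_poissonMeasure hX hZ hXZ
    (measurable_one.indicator hA)
  simp_rw [← ENNReal.toReal_natCast]
  rw [integral_toReal (by fun_prop) (by simp), measureReal_def, ← ENNReal.coe_toReal,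
    ← ENNReal.toReal_mul, ← lintegral_indicator₀ hA_null, ← lintegral_indicator_one₀ hA_succ_null]
  have indicator_mul (ω : Ω) : {ω | (X ω, Z ω) ∈ A}.indicator (fun ω ↦ (X ω : ℝ≥0∞)) ω =
      X ω * A.indicator 1 (X ω, Z ω) := by
    by_cases h : (X ω, Z ω) ∈ A <;> simp [h]
  simp_rw [indicator_mul, key]
  rfl

lemma lintegral_natCast_of_hasLaw_poissonMeasure (hX : HasLaw X Po(r) μ) : ∫⁻ ω, X ω ∂μ = r := by
  rw [hX.lintegral_comp (f := fun n ↦ (n : ℝ≥0∞)) (by fun_prop)]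
  simpa using lintegral_natCast_mul_poissonMeasure r 1

lemma integrable_natCast_of_hasLaw_poissonMeasure (hX : HasLaw X Po(r) μ) :
    Integrable (fun ω ↦ (X ω : ℝ)) μ := by
  have hXm := hX.aemeasurable
  simpa using integrable_toReal_of_lintegral_ne_top (f := fun ω ↦ (X ω : ℝ≥0∞)) (by fun_prop)
    (lintegral_natCast_of_hasLaw_poissonMeasure hX ▸ ENNReal.coe_ne_top)

lemma integral_natCast_of_hasLaw_poissonMeasure (hX : HasLaw X Po(r) μ) :
    ∫ ω, (X ω : ℝ) ∂μ = r := by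
  have hXm := hX.aemeasurable
  simp_rw [← ENNReal.toReal_natCast]
  rw [integral_toReal (by fun_prop) (by simp), lintegral_natCast_of_hasLaw_poissonMeasure hX,
    ENNReal.coe_toReal]

lemma measureReal_eq_add_eq_tsum [IsFiniteMeasure μ] {ν ρ : Measure ℕ}
    (hX : HasLaw X ν μ) (hY : HasLaw Y ρ μ) (hXY : IndepFun X Y μ) (k : ℕ) :
    μ.real {ω | X ω = Y ω + k} = ∑' j, ν.real {j + k} * ρ.real {j} := by
  have : IsFiniteMeasure ν := hX.isFiniteMeasure_iff.1 ‹_›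
  have : IsFiniteMeasure ρ := hY.isFiniteMeasure_iff.1 ‹_›
  rw [measureReal_def, (hXY.hasLaw_prod hX hY).measure_eq (p := fun q ↦ q.1 = q.2 + k) .of_discrete,
    Measure.prod_apply_symm .of_discrete, lintegral_countable', ENNReal.tsum_toReal_eq
      fun j ↦ ENNReal.mul_ne_top (measure_ne_top _ _) (measure_ne_top _ _)]
  exact tsum_congr fun j ↦ ENNReal.toReal_mul

lemma measureReal_eq_add_of_hasLaw_poissonMeasure (hs : s ≠ 0) (hX : HasLaw X Po(r) μ)
    (hY : HasLaw Y Po(s) μ) (hXY : IndepFun X Y μ) (k : ℕ) :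
    μ.real {ω | X ω = Y ω + k} =
      Real.exp (-(r + s)) * (√(r / s) ^ k * besselI k (2 * √(r * s))) := by
  have := hX.isProbabilityMeasure
  rw [measureReal_eq_add_eq_tsum hX hY hXY, besselI, ← tsum_mul_left, ← tsum_mul_left]
  refine tsum_congr fun j ↦ ?_
  have sqrt_mul_sqrt : √(r / s : ℝ) * √(r * s) = r := by
    rw [← Real.sqrt_mul (by positivity), show (r / s : ℝ) * (r * s) = r ^ 2 by field_simp,
      Real.sqrt_sq r.coe_nonneg]
  have power : √(r / s : ℝ) ^ k * √(r * s) ^ (2 * j + k) = r ^ (j + k) * s ^ j := by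
    calc √(r / s : ℝ) ^ k * √(r * s) ^ (2 * j + k)
        = (√(r * s) ^ 2) ^ j * (√(r / s : ℝ) * √(r * s)) ^ k := by ring
      _ = r ^ (j + k) * s ^ j := by
        rw [Real.sq_sqrt (by positivity), sqrt_mul_sqrt]; ring
  rw [poissonMeasure_real_singleton, poissonMeasure_real_singleton, neg_add, Real.exp_add,
    mul_div_cancel_left₀ _ two_ne_zero, ← mul_div_assoc (√_ ^ k), power]
  ring

lemma measureReal_le_of_hasLaw_poissonMeasure (hs : s ≠ 0) (hX : HasLaw X Po(r) μ)
    (hY : HasLaw Y Po(s) μ) (hXY : IndepFun X Y μ) :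
    μ.real {ω | Y ω ≤ X ω} = marcumQ1 √(2 * r) √(2 * s) := by
  have := hX.isProbabilityMeasure
  have hXm := hX.aemeasurable
  have hYm := hY.aemeasurable
  have iUnion_eq : {ω | Y ω ≤ X ω} = ⋃ k, {ω | X ω = Y ω + k} := by
    ext ω
    simp [le_iff_exists_add]
  have disjoint : Pairwise (Function.onFun (AEDisjoint μ) fun k ↦ {ω | X ω = Y ω + k}) :=
    fun k l hkl ↦ (Set.disjoint_left.2 fun ω hk hl ↦
      hkl (Nat.add_left_cancel (hk.symm.trans hl))).aedisjoint
  have null (k : ℕ) : NullMeasurableSet {ω | X ω = Y ω + k} μ :=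
    nullMeasurableSet_eq_fun hXm (by fun_prop)
  have exponent : -(√(2 * r : ℝ) ^ 2 + √(2 * s : ℝ) ^ 2) / 2 = -(r + s) := by
    rw [Real.sq_sqrt (by positivity), Real.sq_sqrt (by positivity)]; ring
  have ratio : √(2 * r : ℝ) / √(2 * s) = √(r / s) := by
    rw [← Real.sqrt_div (by positivity), mul_div_mul_left _ _ two_ne_zero]
  have product : √(2 * r : ℝ) * √(2 * s) = 2 * √(r * s) := by
    rw [← Real.sqrt_mul (by positivity), show (2 * r * (2 * s) : ℝ) = 2 ^ 2 * (r * s) by ring,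
      Real.sqrt_mul (by positivity), Real.sqrt_sq zero_le_two]
  rw [measureReal_def, iUnion_eq, measure_iUnion₀ disjoint null,
    ENNReal.tsum_toReal_eq fun k ↦ measure_ne_top _ _]
  simp_rw [← measureReal_def, measureReal_eq_add_of_hasLaw_poissonMeasure hs hX hY hXY]
  rw [marcumQ1, exponent, ratio, product, tsum_mul_left]

lemma integral_min_of_hasLaw_poissonMeasure_eq_measureReal
    (hX : HasLaw X Po(r) μ) (hY : HasLaw Y Po(s) μ) (hXY : IndepFun X Y μ) :
    ∫ ω, min (X ω : ℝ) (Y ω) ∂μ =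
      r * μ.real {ω | X ω + 1 < Y ω} + s * μ.real {ω | Y ω + 1 ≤ X ω} := by
  rw [integral_min_eq_setIntegral_add_setIntegral (integrable_natCast_of_hasLaw_poissonMeasure hX)
    (integrable_natCast_of_hasLaw_poissonMeasure hY)]
  simp_rw [Nat.cast_lt, Nat.cast_le]
  congr 1
  · exact setIntegral_natCast_of_hasLaw_poissonMeasure hX hY.aemeasurable hXY
      (A := {p | p.1 < p.2}) .of_discrete
  · exact setIntegral_natCast_of_hasLaw_poissonMeasure hY hX.aemeasurable hXY.symm
      (A := {p | p.1 ≤ p.2}) .of_discrete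

lemma measureReal_le_eq_add_succ_le [IsFiniteMeasure μ] (hX : AEMeasurable X μ)
    (hY : AEMeasurable Y μ) :
    μ.real {ω | X ω ≤ Y ω} = μ.real {ω | Y ω = X ω} + μ.real {ω | X ω + 1 ≤ Y ω} := by
  rw [← measureReal_union₀ (nullMeasurableSet_le (by fun_prop) hY)
    (Set.disjoint_left.2 fun ω h h' ↦ by simp_all).aedisjoint]
  congr 1
  ext ω
  simp only [Set.mem_ofPred_eq, Set.mem_union]
  lia

lemma measureReal_succ_lt [IsProbabilityMeasure μ] (hX : AEMeasurable X μ)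
    (hY : AEMeasurable Y μ) :
    μ.real {ω | X ω + 1 < Y ω} = 1 - μ.real {ω | Y ω ≤ X ω} - μ.real {ω | Y ω = X ω + 1} := by
  have split : μ.real {ω | X ω < Y ω} =
      μ.real {ω | Y ω = X ω + 1} + μ.real {ω | X ω + 1 < Y ω} :=
    measureReal_le_eq_add_succ_le (hX.add_const 1) hY
  have compl : {ω | Y ω ≤ X ω}ᶜ = {ω | X ω < Y ω} := by ext; simp
  rw [← probReal_compl_eq_one_sub₀ (nullMeasurableSet_le hY hX), compl, split,
    add_sub_cancel_left]

lemma integral_min_of_hasLaw_poissonMeasure (hr : r ≠ 0) (hs : s ≠ 0)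
    (hX : HasLaw X Po(r) μ) (hY : HasLaw Y Po(s) μ) (hXY : IndepFun X Y μ) :
    ∫ ω, min (X ω : ℝ) (Y ω) ∂μ =
      r + (s - r) * marcumQ1 √(2 * r) √(2 * s) -
        Real.exp (-(r + s)) *
          (s * besselI 0 (2 * √(r * s)) + √(r * s) * besselI 1 (2 * √(r * s))) := by
  have := hX.isProbabilityMeasure
  have diagonal := measureReal_eq_add_of_hasLaw_poissonMeasure hs hX hY hXY 0
  have superdiagonal := measureReal_eq_add_of_hasLaw_poissonMeasure hr hY hX hXY.symm 1
  have mul_sqrt_div : r * √(s / r : ℝ) = √(r * s) := by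
    calc r * √(s / r : ℝ) = √(r ^ 2 * (s / r)) := by
          rw [Real.sqrt_mul (sq_nonneg _), Real.sqrt_sq r.coe_nonneg]
      _ = √(r * s) := by congr 1; field_simp
  have marcum := measureReal_le_of_hasLaw_poissonMeasure hs hX hY hXY
  have below_diagonal := measureReal_le_eq_add_succ_le hY.aemeasurable hX.aemeasurable
  simp only [add_zero, pow_zero, one_mul] at diagonal
  rw [pow_one, add_comm (s : ℝ), mul_comm (s : ℝ)] at superdiagonal
  rw [integral_min_of_hasLaw_poissonMeasure_eq_measureReal hX hY hXY,
    measureReal_succ_lt hX.aemeasurable hY.aemeasurable, superdiagonal,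
    ← sub_eq_iff_eq_add'.2 below_diagonal, diagonal, marcum, ← mul_sqrt_div]
  ring

end Poisson

theorem stmt_19_general {Ω : Type*} [MeasurableSpace Ω] (μ : Measure Ω) [IsProbabilityMeasure μ]
    (x y : ℝ) (hx : 0 < x) (hy : 0 < y) (X Y : Ω → ℕ)
    (hX : ∀ j : ℕ, μ {ω | X ω = j} = ENNReal.ofReal (Real.exp (-x) * x ^ j / Nat.factorial j))
    (hY : ∀ j : ℕ, μ {ω | Y ω = j} = ENNReal.ofReal (Real.exp (-y) * y ^ j / Nat.factorial j))
    (hindep : IndepFun X Y μ) :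
    (∫ ω, min (X ω : ℝ) (Y ω : ℝ) ∂μ = (y + x - ∫ ω, |(X ω : ℝ) - (Y ω : ℝ)| ∂μ) / 2) ∧
    (∫ ω, min (X ω : ℝ) (Y ω : ℝ) ∂μ =
      (y + x - 2 * Real.exp (-x - y) * (y * besselI 0 (2 * √(x * y)) +
          √(x * y) * besselI 1 (2 * √(x * y))) -
        (y - x) * (1 - 2 * marcumQ1 √(2 * x) √(2 * y))) / 2) := by
  lift x to ℝ≥0 using hx.le
  lift y to ℝ≥0 using hy.le
  have lawX : HasLaw X Po(x) μ :=
    hasLaw_of_measure_preimage_singleton fun j ↦ (hX j).trans (poissonMeasure_singleton x j).symm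
  have lawY : HasLaw Y Po(y) μ :=
    hasLaw_of_measure_preimage_singleton fun j ↦ (hY j).trans (poissonMeasure_singleton y j).symm
  constructor
  · rw [integral_min_eq_half (integrable_natCast_of_hasLaw_poissonMeasure lawX)
      (integrable_natCast_of_hasLaw_poissonMeasure lawY),
      integral_natCast_of_hasLaw_poissonMeasure lawX,
      integral_natCast_of_hasLaw_poissonMeasure lawY, add_comm (x : ℝ)]
  · rw [integral_min_of_hasLaw_poissonMeasure (NNReal.coe_pos.1 hx).ne' (NNReal.coe_pos.1 hy).ne'
      lawX lawY hindep, neg_add']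
    ring

/-- `h(x) = E[min(Poi(x), Poi(1))]` satisfies `h(x) = (1 + x − E|Poi(x) − Poi(1)|)/2`
and has a closed form in terms of Bessel and Marcum Q functions. -/
theorem stmt_19 {Ω : Type*} [MeasurableSpace Ω] (μ : Measure Ω) [IsProbabilityMeasure μ]
    (x : ℝ) (hx : 0 < x) (X Y : Ω → ℕ)
    (hX : ∀ j : ℕ, μ {ω | X ω = j}
      = ENNReal.ofReal (Real.exp (-x) * x ^ j / Nat.factorial j))
    (hY : ∀ j : ℕ, μ {ω | Y ω = j}
      = ENNReal.ofReal (Real.exp (-1) / Nat.factorial j))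
    (hindep : IndepFun X Y μ) :
    (∫ ω, min (X ω : ℝ) (Y ω : ℝ) ∂μ
        = (1 + x - ∫ ω, |(X ω : ℝ) - (Y ω : ℝ)| ∂μ) / 2) ∧
    (∫ ω, min (X ω : ℝ) (Y ω : ℝ) ∂μ
        = (1 + x
            - 2 * Real.exp (-x - 1) * (besselI 0 (2 * Real.sqrt x)
                + Real.sqrt x * besselI 1 (2 * Real.sqrt x))
            - (1 - x) * (1 - 2 * marcumQ1 (Real.sqrt (2 * x)) (Real.sqrt 2))) / 2) := by
  simpa using stmt_19_general μ x 1 hx one_pos X Y hX (by simpa using hY) hindep
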